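/- Let (L_1, L_2, G) be a pseudo-fibered triple. Then every nontrivial element g ∈ G has only finitely many fixed points on S^1. -/

import Mathlib

/-!
Suppose a nontrivial `g ∈ G` has infinitely many fixed points. The contradiction is an ideal polygon
with infinitely many vertices in one of the two lamination systems.

*Local picture (`Adj.next`).* Let `a`, `b` be consecutive fixed points. Since the two systems have
no common endpoint, `b` is not an endpoint of one of them, say `L`. As `L` is very full, there are
arbitrarily small leaves around `b` (`exists_small`): otherwise the maximal intervals of `L`
avoiding `b` would form a gap with vertex `b`, and every vertex of a finite-sided gap is an
endpoint. A small leaf around `b` is contracted by `g` or `g⁻¹`, and iterating gives limit leaves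
with fixed endpoints (`exists_limit`). One direction of iteration cannot produce a leaf ending at
`b`, which forces `b` to be the only fixed point inside the small leaf; the other direction produces
a leaf `(a, c)` of `L` in which `b` is the only fixed point, so `c` is the fixed point after `b`.

*The sequence (`exists_seq`).* Now `c` is an endpoint of `L`, hence not of the other system, and
the argument repeats with the systems exchanged. This gives consecutive fixed points `p₀, p₁, p₂, …`
such that `(pₙ, pₙ₊₂)` is a leaf of the system determined by the parity of `n`. The points are
distinct, since a finite cycle of consecutive fixed points would contain every fixed point
(`fixed_subset_of_succ`).

*The polygon.* The leaf `(pₙ, pₙ₊₂)` is not a limit of leaves from outside: such leaves would be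
blocked by `(pₙ₊₂, pₙ₊₄)`, hence end at `pₙ₊₂`, and iterating `g` on one of them would give a leaf
ending at `pₙ₋₁`, an endpoint of the other system (`not_limit`). So it is a side of a non-leaf gap
(`exists_gap`). The gaps of `(pₙ, pₙ₊₂)` and `(pₙ₊₂, pₙ₊₄)` share the vertex `pₙ₊₂` and are equal by
looseness. Hence one gap has all the points of one parity as vertices, against very fullness.
-/

open Set Topology

noncomputable section

/-- Stereographic projection from `1 ∈ S¹`. -/
def sproj (z : Circle) : ℝ := (z : ℂ).im / ((z : ℂ).re - 1)

/-- `(a,b,c)` is a positively oriented triple on `S¹`. -/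
def posOri (a b c : Circle) : Prop :=
  a ≠ b ∧ b ≠ c ∧ c ≠ a ∧ sproj (a⁻¹ * b) < sproj (a⁻¹ * c)

/-- The nondegenerate open interval `(u,v)` on `S¹`. -/
def oInt (u v : Circle) : Set Circle := {p | posOri u p v}

/-- `I` is a nondegenerate open interval on `S¹`. -/
def IsND (I : Set Circle) : Prop := ∃ u v : Circle, u ≠ v ∧ I = oInt u v

/-- The dual interval `I* = (v,u)` of `I = (u,v)`, i.e. the interior of the complement. -/
def dual (I : Set Circle) : Set Circle := interior Iᶜ

/-- The leaf `{I, I*}` lies on `J`. -/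
def LiesOn (I J : Set Circle) : Prop := I ⊆ J ∨ dual I ⊆ J

/-- A lamination system on `S¹`. -/
structure LamSys (L : Set (Set Circle)) : Prop where
  nonempty : L.Nonempty
  nd : ∀ I ∈ L, IsND I
  dualMem : ∀ I ∈ L, dual I ∈ L
  unlinked : ∀ I ∈ L, ∀ J ∈ L, LiesOn I J ∨ LiesOn I (dual J)
  chainUnion : ∀ f : ℕ → Set Circle, (∀ n, f n ∈ L) → (∀ n, f n ⊆ f (n + 1)) →
    IsND (⋃ n, f n) → (⋃ n, f n) ∈ L

/-- The leaf associated to an interval. -/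
def leafOf (I : Set Circle) : Set (Set Circle) := {I, dual I}

/-- `liminf` of a sequence of sets. -/
def sLiminf (f : ℕ → Set Circle) : Set Circle := ⋃ k, ⋂ n, ⋂ (_ : k ≤ n), f n

/-- `limsup` of a sequence of sets. -/
def sLimsup (f : ℕ → Set Circle) : Set Circle := ⋂ k, ⋃ n, ⋃ (_ : k ≤ n), f n

/-- The sequence of intervals converges to `J`. -/
def ConvTo (f : ℕ → Set Circle) (J : Set Circle) : Prop :=
  J ⊆ sLiminf f ∧ sLiminf f ⊆ sLimsup f ∧ sLimsup f ⊆ closure J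

/-- A gap of a lamination system. -/
def IsGap (L G : Set (Set Circle)) : Prop :=
  G ⊆ L ∧ (∀ I ∈ G, ∀ J ∈ G, I ≠ J → I ∩ J = ∅) ∧ ∀ I ∈ L, ∃ J ∈ G, LiesOn I J

/-- A gap which is a leaf. -/
def IsLeafGap (G : Set (Set Circle)) : Prop := ∃ I, G = leafOf I

/-- The vertex (endpoint) set of a gap. -/
def vset (G : Set (Set Circle)) : Set Circle := (⋃₀ G)ᶜ

/-- A very full lamination system: every gap is an ideal polygon (finite vertex set). -/
def VeryFull (L : Set (Set Circle)) : Prop := ∀ G, IsGap L G → (vset G).Finite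

/-- The set of endpoints of leaves of `L`. -/
def ELset (L : Set (Set Circle)) : Set Circle := ⋃ I ∈ L, frontier I

/-- A rainbow at `p`. -/
def Rainbow (L : Set (Set Circle)) (p : Circle) (f : ℕ → Set Circle) : Prop :=
  (∀ n, f n ∈ L) ∧ (∀ n, f (n + 1) ⊆ f n) ∧ (⋂ n, f n) = {p}

/-- An `I`-side sequence of leaves. -/
def SideSeq (L : Set (Set Circle)) (I : Set Circle) (f : ℕ → Set Circle) : Prop :=
  (∀ n, f n ∈ L) ∧ (∀ n, I ∉ leafOf (f n)) ∧ (∀ n, LiesOn (f n) I) ∧ ConvTo f I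

/-- `I` is isolated in `L`. -/
def IsolatedInt (L : Set (Set Circle)) (I : Set Circle) : Prop := ∀ f, ¬ SideSeq L I f

/-- `C_p^I`. -/
def Cset (L : Set (Set Circle)) (p : Circle) (I : Set Circle) : Set (Set Circle) :=
  {J ∈ L | p ∈ J ∧ J ⊆ I}

/-- The group of self-homeomorphisms of the circle (composition as multiplication). -/
instance : Group (Circle ≃ₜ Circle) where
  mul g h := h.trans g
  one := Homeomorph.refl _
  inv := Homeomorph.symm
  mul_assoc _ _ _ := Homeomorph.ext fun _ => rfl
  one_mul _ := Homeomorph.ext fun _ => rfl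
  mul_one _ := Homeomorph.ext fun _ => rfl
  inv_mul_cancel g := Homeomorph.ext fun x => g.symm_apply_apply x

/-- An orientation-preserving homeomorphism of the circle. -/
def OrientPres (g : Circle ≃ₜ Circle) : Prop :=
  ∀ a b c, posOri a b c → posOri (g a) (g b) (g c)

/-- `L` is invariant under a subgroup `G` of homeomorphisms. -/
def GInv (G : Subgroup (Circle ≃ₜ Circle)) (L : Set (Set Circle)) : Prop :=
  ∀ g ∈ G, ∀ I ∈ L, (⇑g) '' I ∈ L

/-- The image of a gap under a homeomorphism. -/
def gapIm (g : Circle ≃ₜ Circle) (P : Set (Set Circle)) : Set (Set Circle) :=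
  (fun I => (⇑g) '' I) '' P

/-- `v_G(P)`, the union of the vertex sets of the `G`-orbit of the gap `P`. -/
def vOrb (G : Subgroup (Circle ≃ₜ Circle)) (P : Set (Set Circle)) : Set Circle :=
  ⋃ g ∈ G, vset (gapIm g P)

/-- A loose lamination system: distinct non-leaf gaps have disjoint vertex sets. -/
def Loose (L : Set (Set Circle)) : Prop :=
  ∀ P Q, IsGap L P → IsGap L Q → ¬ IsLeafGap P → ¬ IsLeafGap Q → P ≠ Q →
    vset P ∩ vset Q = ∅

/-- A pseudo-fibered triple `(L₁, L₂, G)`. -/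
structure PFib (L₁ L₂ : Set (Set Circle)) (G : Subgroup (Circle ≃ₜ Circle)) : Prop where
  orient : ∀ g ∈ G, OrientPres g
  fg : G.FG
  lam₁ : LamSys L₁
  lam₂ : LamSys L₂
  inv₁ : GInv G L₁
  inv₂ : GInv G L₂
  veryFull₁ : VeryFull L₁
  veryFull₂ : VeryFull L₂
  loose₁ : Loose L₁
  loose₂ : Loose L₂
  disjEnds : ELset L₁ ∩ ELset L₂ = ∅

end

/-! ### The cyclic order of the circle -/

/-- Twice the signed area of the triangle `a b c`; it is positive exactly on positively oriented
triples, which makes the cyclic symmetry of `posOri` visible. -/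
noncomputable def triArea (a b c : Circle) : ℝ :=
  ((b : ℂ).re - (a : ℂ).re) * ((c : ℂ).im - (a : ℂ).im) -
    ((b : ℂ).im - (a : ℂ).im) * ((c : ℂ).re - (a : ℂ).re)

lemma circ_sq (a : Circle) : (a : ℂ).re ^ 2 + (a : ℂ).im ^ 2 = 1 := by
  have h := Circle.normSq_coe a
  rw [Complex.normSq_apply] at h
  linarith

lemma circ_ext {a b : Circle} (h1 : (a : ℂ).re = (b : ℂ).re) (h2 : (a : ℂ).im = (b : ℂ).im) :
    a = b := Circle.ext (Complex.ext h1 h2)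

lemma inv_mul_re (a b : Circle) : ((a⁻¹ * b : Circle) : ℂ).re =
    (a : ℂ).re * (b : ℂ).re + (a : ℂ).im * (b : ℂ).im := by
  rw [Circle.coe_mul, Circle.coe_inv_eq_conj]; simp

lemma inv_mul_im (a b : Circle) : ((a⁻¹ * b : Circle) : ℂ).im =
    (a : ℂ).re * (b : ℂ).im - (a : ℂ).im * (b : ℂ).re := by
  rw [Circle.coe_mul, Circle.coe_inv_eq_conj]; simp; ring

lemma inv_mul_re_lt {a b : Circle} (h : a ≠ b) : ((a⁻¹ * b : Circle) : ℂ).re - 1 < 0 := by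
  rw [inv_mul_re]
  by_contra hc
  have ha := circ_sq a
  have hb := circ_sq b
  apply h
  have h0 : ((a : ℂ).re - (b : ℂ).re) ^ 2 + ((a : ℂ).im - (b : ℂ).im) ^ 2 ≤ 0 := by nlinarith
  have h1 : ((a : ℂ).re - (b : ℂ).re) ^ 2 = 0 := by
    nlinarith [sq_nonneg ((a : ℂ).re - (b : ℂ).re),
      sq_nonneg ((a : ℂ).im - (b : ℂ).im)]
  have h2 : ((a : ℂ).im - (b : ℂ).im) ^ 2 = 0 := by
    nlinarith [sq_nonneg ((a : ℂ).re - (b : ℂ).re),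
      sq_nonneg ((a : ℂ).im - (b : ℂ).im)]
  apply circ_ext
  · linarith [pow_eq_zero_iff (two_ne_zero) |>.1 h1]
  · linarith [pow_eq_zero_iff (two_ne_zero) |>.1 h2]

lemma sproj_lt_iff {a b c : Circle} (hb : a ≠ b) (hc : a ≠ c) :
    sproj (a⁻¹ * b) < sproj (a⁻¹ * c) ↔ 0 < triArea a b c := by
  have h1 := inv_mul_re_lt hb
  have h2 := inv_mul_re_lt hc
  unfold sproj
  rw [← neg_div_neg_eq, ← neg_div_neg_eq (((a⁻¹ * c : Circle) : ℂ).im),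
    div_lt_div_iff₀ (by linarith) (by linarith), ← sub_pos]
  rw [inv_mul_re, inv_mul_re, inv_mul_im, inv_mul_im]
  have ha := circ_sq a
  -- Rotation by `a⁻¹` preserves signed areas.
  have key : triArea a b c = ((a : ℂ).re ^ 2 + (a : ℂ).im ^ 2) *
      ((b : ℂ).re * (c : ℂ).im - (b : ℂ).im * (c : ℂ).re)
      - ((a : ℂ).re * (c : ℂ).im - (a : ℂ).im * (c : ℂ).re)
      + ((a : ℂ).re * (b : ℂ).im - (a : ℂ).im * (b : ℂ).re) := by
    unfold triArea; rw [ha]; ring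
  rw [key]
  ring_nf

lemma posOri_iff {a b c : Circle} : posOri a b c ↔ 0 < triArea a b c := by
  constructor
  · rintro ⟨h1, -, h3, h4⟩
    exact (sproj_lt_iff h1 (Ne.symm h3)).1 h4
  · intro h
    have h1 : a ≠ b := by rintro rfl; simp [triArea] at h
    have h2 : b ≠ c := by
      rintro rfl
      have : triArea a b b = 0 := by unfold triArea; ring
      linarith
    have h3 : a ≠ c := by rintro rfl; simp [triArea] at h
    exact ⟨h1, h2, h3.symm, (sproj_lt_iff h1 h3).2 h⟩

lemma posOri.rot {a b c : Circle} (h : posOri a b c) : posOri b c a := by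
  rw [posOri_iff] at *
  have : triArea b c a = triArea a b c := by unfold triArea; ring
  linarith

lemma posOri.trans {a b c d : Circle} (h : posOri a b c) (h' : posOri a c d) : posOri a b d := by
  refine ⟨h.1, ?_, h'.2.2.1, h.2.2.2.trans h'.2.2.2⟩
  rintro rfl
  exact lt_asymm h.2.2.2 h'.2.2.2

lemma posOri.asymm {a b c : Circle} (h : posOri a b c) (hh : posOri a c b) : False :=
  lt_asymm h.2.2.2 hh.2.2.2

/-- The point of `S¹` whose stereographic projection from `1` is `t`. -/
noncomputable def sinv (t : ℝ) : Circle :=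
  Circle.ofConjDivSelf ((t : ℂ) + Complex.I) (by
    intro h; have := congrArg Complex.im h; simp at this)

lemma sinv_coe (t : ℝ) : ((sinv t : Circle) : ℂ) =
    ⟨(t ^ 2 - 1) / (t ^ 2 + 1), -2 * t / (t ^ 2 + 1)⟩ := by
  have h : t ^ 2 + 1 ≠ 0 := by positivity
  have h' : (t : ℂ) + Complex.I ≠ 0 := by
    intro h; have := congrArg Complex.im h; simp at this
  change (starRingEnd ℂ) ((t : ℂ) + Complex.I) / ((t : ℂ) + Complex.I) = _
  rw [div_eq_iff h']
  apply Complex.ext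
  · simp; field_simp; ring
  · simp; field_simp; ring

lemma sproj_sinv (t : ℝ) : sproj (sinv t) = t := by
  have h : t ^ 2 + 1 ≠ 0 := by positivity
  unfold sproj
  rw [sinv_coe]
  have : (t ^ 2 - 1) / (t ^ 2 + 1) - 1 = -2 / (t ^ 2 + 1) := by field_simp; ring
  simp only [this]
  field_simp

lemma sinv_ne_one (t : ℝ) : sinv t ≠ 1 := by
  have h : t ^ 2 + 1 ≠ 0 := by positivity
  intro hc
  have := congrArg (fun z : Circle => (z : ℂ).re) hc
  simp only [sinv_coe, Circle.coe_one, Complex.one_re] at this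
  field_simp at this
  linarith

lemma sinv_sproj {z : Circle} (hz : z ≠ 1) : sinv (sproj z) = z := by
  have h := inv_mul_re_lt (Ne.symm hz)
  rw [inv_one, one_mul] at h
  have hs := circ_sq z
  have hne : (z : ℂ).re - 1 ≠ 0 := h.ne
  have e : sproj z ^ 2 + 1 = -2 / ((z : ℂ).re - 1) := by
    unfold sproj; field_simp; nlinarith
  have e' : sproj z ^ 2 - 1 = -2 / ((z : ℂ).re - 1) - 2 := by linarith
  apply circ_ext
  · rw [sinv_coe]; simp only [e, e']; field_simp; ring
  · rw [sinv_coe]; simp only [e]; unfold sproj; field_simp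

/-- The stereographic coordinate on `S¹ \ {b}`; it is increasing for the cyclic order. -/
noncomputable def crd (b x : Circle) : ℝ := sproj (b⁻¹ * x)

/-- The inverse of `crd b`, a parametrization of `S¹ \ {b}` by the real line. -/
noncomputable def par (b : Circle) (t : ℝ) : Circle := b * sinv t

lemma crd_par (b : Circle) (t : ℝ) : crd b (par b t) = t := by
  simp [crd, par, sproj_sinv]

lemma par_ne (b : Circle) (t : ℝ) : par b t ≠ b := by
  intro h
  exact sinv_ne_one t (mul_eq_left.1 h)

lemma par_crd {b x : Circle} (h : x ≠ b) : par b (crd b x) = x := by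
  unfold par crd
  rw [sinv_sproj]
  · simp
  · intro hc; exact h (inv_mul_eq_one.1 hc).symm

lemma crd_inj {b x y : Circle} (hx : x ≠ b) (hy : y ≠ b) (h : crd b x = crd b y) : x = y := by
  rw [← par_crd hx, h, par_crd hy]

lemma par_inj (b : Circle) : Function.Injective (par b) :=
  Function.LeftInverse.injective (crd_par b)

lemma posOri_par {b : Circle} {s t : ℝ} : posOri b (par b s) (par b t) ↔ s < t := by
  constructor
  · rintro ⟨-, -, -, h⟩
    simpa [← crd.eq_def, crd_par] using h
  · intro h
    refine ⟨(par_ne b s).symm, fun hc => h.ne (par_inj b hc), par_ne b t, ?_⟩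
    simpa [← crd.eq_def, crd_par] using h

lemma posOri_total {a b c : Circle} (h1 : a ≠ b) (h2 : b ≠ c) (h3 : c ≠ a) :
    posOri a b c ∨ posOri a c b := by
  rcases lt_trichotomy (crd a b) (crd a c) with h | h | h
  · exact Or.inl ⟨h1, h2, h3, h⟩
  · exact absurd (crd_inj h1.symm h3 h) h2
  · exact Or.inr ⟨h3.symm, h2.symm, h1.symm, h⟩

lemma continuous_sinv : Continuous sinv := by
  refine continuous_induced_rng.2 ?_
  have : (fun t : ℝ => ((sinv t : Circle) : ℂ)) = fun t : ℝ =>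
      (starRingEnd ℂ) ((t : ℂ) + Complex.I) / ((t : ℂ) + Complex.I) := rfl
  change Continuous (fun t : ℝ => ((sinv t : Circle) : ℂ))
  rw [this]
  refine Continuous.div (by fun_prop) (by fun_prop) ?_
  intro t h; have := congrArg Complex.im h; simp at this

lemma continuous_par (b : Circle) : Continuous (par b) :=
  continuous_const.mul continuous_sinv

lemma continuousOn_crd (b : Circle) : ContinuousOn (crd b) {b}ᶜ := by
  have h : Continuous fun x : Circle => ((b⁻¹ * x : Circle) : ℂ) :=
    continuous_subtype_val.comp (continuous_const.mul continuous_id)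
  refine ContinuousOn.div (Complex.continuous_im.comp h).continuousOn
    ((Complex.continuous_re.comp h).sub continuous_const).continuousOn ?_
  intro x hx
  exact (inv_mul_re_lt (Ne.symm hx)).ne

lemma par_image (b : Circle) (U : Set ℝ) : par b '' U = {b}ᶜ ∩ crd b ⁻¹' U := by
  ext x
  constructor
  · rintro ⟨t, ht, rfl⟩
    exact ⟨par_ne b t, by simpa [crd_par] using ht⟩
  · rintro ⟨h1, h2⟩
    exact ⟨_, h2, par_crd h1⟩

lemma isOpenEmbedding_par (b : Circle) : IsOpenEmbedding (par b) := by
  refine .of_continuous_injective_isOpenMap (continuous_par b) (par_inj b) fun U hU => ?_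
  rw [par_image]
  exact (continuousOn_crd b).isOpen_inter_preimage isOpen_compl_singleton hU

/-! ### Open intervals of the circle -/

lemma oInt_left_par (b : Circle) (t : ℝ) : oInt b (par b t) = par b '' Iio t := by
  ext x
  constructor
  · intro h
    refine ⟨crd b x, ?_, par_crd h.1.symm⟩
    have := h
    rw [← par_crd h.1.symm] at this
    exact posOri_par.1 this
  · rintro ⟨s, hs, rfl⟩
    exact posOri_par.2 hs

lemma oInt_right_par (b : Circle) (t : ℝ) : oInt (par b t) b = par b '' Ioi t := by
  ext x
  constructor
  · intro h
    have h' : posOri b (par b t) x := h.rot.rot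
    refine ⟨crd b x, ?_, par_crd h'.2.2.1⟩
    rw [← par_crd h'.2.2.1] at h'
    exact posOri_par.1 h'
  · rintro ⟨s, hs, rfl⟩
    exact (posOri_par.2 hs).rot

lemma oInt_par_par (b : Circle) {s t : ℝ} (h : s < t) :
    oInt (par b s) (par b t) = par b '' Ioo s t := by
  have hst := posOri_par (b := b).2 h
  ext x
  constructor
  · intro hx
    have hx' : posOri (par b s) x (par b t) := hx
    have h' : posOri b (par b s) x := (hx'.trans hst.rot).rot.rot
    have h'' : posOri b x (par b t) := (hst.rot.rot.trans hx'.rot.rot).rot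
    have hne := h'.2.2.1
    refine ⟨crd b x, ?_, par_crd hne⟩
    rw [← par_crd hne] at h' h''
    exact ⟨posOri_par.1 h', posOri_par.1 h''⟩
  · rintro ⟨r, ⟨h1, h2⟩, rfl⟩
    have a1 := posOri_par (b := b).2 h1
    have a2 := posOri_par (b := b).2 h2
    -- in the order based at `r`, the points read `t`, `b`, `s`
    exact (a2.rot.trans a1.rot.rot).rot.rot

lemma exists_par {u v : Circle} (h : u ≠ v) : ∃ t, v = par u t :=
  ⟨crd u v, (par_crd h.symm).symm⟩

lemma isOpen_oInt {u v : Circle} (h : u ≠ v) : IsOpen (oInt u v) := by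
  obtain ⟨t, rfl⟩ := exists_par h
  rw [oInt_left_par]
  exact (isOpenEmbedding_par u).isOpenMap _ isOpen_Iio

lemma isPreconnected_oInt {u v : Circle} (h : u ≠ v) : IsPreconnected (oInt u v) := by
  obtain ⟨t, rfl⟩ := exists_par h
  rw [oInt_left_par]
  exact isPreconnected_Iio.image _ (continuous_par u).continuousOn

lemma nonempty_oInt {u v : Circle} (h : u ≠ v) : (oInt u v).Nonempty := by
  obtain ⟨t, rfl⟩ := exists_par h
  rw [oInt_left_par]
  exact nonempty_Iio.image _

lemma left_notMem_oInt (u v : Circle) : u ∉ oInt u v := fun h => h.1 rfl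

lemma right_notMem_oInt (u v : Circle) : v ∉ oInt u v := fun h => h.2.1 rfl

lemma right_mem_closure {u v : Circle} (h : u ≠ v) : v ∈ closure (oInt u v) := by
  obtain ⟨t, rfl⟩ := exists_par h
  rw [oInt_left_par]
  refine image_closure_subset_closure_image (continuous_par u) ⟨t, ?_, rfl⟩
  rw [closure_Iio]; exact self_mem_Iic

lemma left_mem_closure {u v : Circle} (h : u ≠ v) : u ∈ closure (oInt u v) := by
  obtain ⟨t, rfl⟩ := exists_par h.symm
  rw [oInt_right_par]
  refine image_closure_subset_closure_image (continuous_par v) ⟨t, ?_, rfl⟩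
  rw [closure_Ioi]; exact self_mem_Ici

lemma oInt_disjoint (u v : Circle) : Disjoint (oInt u v) (oInt v u) := by
  rw [Set.disjoint_left]
  intro x h h'
  exact posOri.asymm h (posOri.rot h').rot

lemma oInt_cover {u v x : Circle} (h : u ≠ v) (h1 : x ∉ oInt u v) (h2 : x ∉ oInt v u) :
    x = u ∨ x = v := by
  by_contra! hc
  rcases posOri_total hc.1.symm hc.2 h.symm with h' | h'
  · exact h1 h'
  · exact h2 h'.rot

lemma closure_oInt {u v : Circle} (h : u ≠ v) : closure (oInt u v) = (oInt v u)ᶜ := by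
  apply Subset.antisymm
  · exact closure_minimal (fun x hx hx' => (Set.disjoint_left.1 (oInt_disjoint u v)) hx hx')
      (isOpen_oInt h.symm).isClosed_compl
  · intro x hx
    by_cases hx' : x ∈ oInt u v
    · exact subset_closure hx'
    · rcases oInt_cover h hx' hx with rfl | rfl
      · exact left_mem_closure h
      · exact right_mem_closure h

lemma dual_eq (I : Set Circle) : dual I = (closure I)ᶜ := interior_compl

lemma dual_oInt {u v : Circle} (h : u ≠ v) : dual (oInt u v) = oInt v u := by
  rw [dual_eq, closure_oInt h, compl_compl]

lemma frontier_oInt {u v : Circle} (h : u ≠ v) : frontier (oInt u v) = {u, v} := by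
  rw [frontier, closure_oInt h, (isOpen_oInt h).interior_eq]
  ext x
  constructor
  · rintro ⟨h1, h2⟩
    exact oInt_cover h h2 h1
  · rintro (rfl | rfl)
    · exact ⟨right_notMem_oInt _ _, left_notMem_oInt _ _⟩
    · exact ⟨left_notMem_oInt _ _, right_notMem_oInt _ _⟩

lemma IsND.isOpen {I : Set Circle} (h : IsND I) : IsOpen I := by
  obtain ⟨u, v, huv, rfl⟩ := h; exact isOpen_oInt huv

lemma IsND.isPreconnected {I : Set Circle} (h : IsND I) : IsPreconnected I := by
  obtain ⟨u, v, huv, rfl⟩ := h; exact isPreconnected_oInt huv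

lemma IsND.nonempty {I : Set Circle} (h : IsND I) : I.Nonempty := by
  obtain ⟨u, v, huv, rfl⟩ := h; exact nonempty_oInt huv

lemma IsND.dual_dual {I : Set Circle} (h : IsND I) : dual (dual I) = I := by
  obtain ⟨u, v, huv, rfl⟩ := h; rw [dual_oInt huv, dual_oInt huv.symm]

lemma IsND.frontier_dual {I : Set Circle} (h : IsND I) : frontier (dual I) = frontier I := by
  obtain ⟨u, v, huv, rfl⟩ := h
  rw [dual_oInt huv, frontier_oInt huv, frontier_oInt huv.symm, Set.pair_comm]

lemma dual_anti {I J : Set Circle} (h : I ⊆ J) : dual J ⊆ dual I :=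
  interior_mono (compl_subset_compl.2 h)

lemma disjoint_dual (I : Set Circle) : Disjoint I (dual I) := by
  rw [Set.disjoint_left, dual_eq]
  exact fun x h h' => h' (subset_closure h)

lemma mem_trichotomy {I : Set Circle} (h : IsOpen I) (x : Circle) :
    x ∈ I ∨ x ∈ dual I ∨ x ∈ frontier I := by
  rw [dual_eq, h.frontier_eq]
  by_cases h1 : x ∈ I
  · exact Or.inl h1
  · by_cases h2 : x ∈ closure I
    · exact Or.inr (Or.inr ⟨h2, h1⟩)
    · exact Or.inr (Or.inl h2)

/-- An interval is determined up to duality by its two endpoints. -/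
lemma IsND.eq_of_mem_frontier {J : Set Circle} (h : IsND J) {u v : Circle} (huv : u ≠ v)
    (hu : u ∈ frontier J) (hv : v ∈ frontier J) : J = oInt u v ∨ J = oInt v u := by
  obtain ⟨a, b, hab, rfl⟩ := h
  rw [frontier_oInt hab] at hu hv
  rcases hu with rfl | rfl <;> rcases hv with rfl | rfl
  · exact absurd rfl huv
  · exact Or.inl rfl
  · exact Or.inr rfl
  · exact absurd rfl huv

/-- An open connected subset of the circle that misses two points is an interval. -/
lemma isND_of_isOpen {W : Set Circle} (ho : IsOpen W) (hc : IsPreconnected W)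
    (hn : W.Nonempty) {y z : Circle} (hyz : y ≠ z) (hy : y ∉ W) (hz : z ∉ W) : IsND W := by
  obtain ⟨S, hS⟩ : ∃ S, S = par y ⁻¹' W := ⟨_, rfl⟩
  have hW : W = par y '' S := by
    rw [hS, eq_comm]
    refine image_preimage_eq_of_subset ?_
    intro x hx
    exact ⟨_, par_crd (ne_of_mem_of_not_mem hx hy)⟩
  have hSo : IsOpen S := hS ▸ ho.preimage (continuous_par y)
  have hSc : IsPreconnected S := by
    rw [hW] at hc
    exact (isOpenEmbedding_par y).isInducing.isPreconnected_image.1 hc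
  have hzS : crd y z ∉ S := by
    intro h
    rw [hS, mem_preimage, par_crd hyz.symm] at h
    exact hz h
  have hSn : S.Nonempty := by rw [hW] at hn; exact hn.of_image
  have hmem := hSc.mem_intervals
  have hint := hSo.interior_eq
  have cIoo : S = Ioo (sInf S) (sSup S) → IsND W := by
    intro h
    have hlt : sInf S < sSup S := by
      rw [h] at hSn; exact nonempty_Ioo.1 hSn
    refine ⟨par y (sInf S), par y (sSup S), fun hh => hlt.ne (par_inj y hh), ?_⟩
    rw [oInt_par_par y hlt, ← h, hW]
  have cIoi : S = Ioi (sInf S) → IsND W := by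
    intro h
    refine ⟨par y (sInf S), y, par_ne _ _, ?_⟩
    rw [oInt_right_par, ← h, hW]
  have cIio : S = Iio (sSup S) → IsND W := by
    intro h
    refine ⟨y, par y (sSup S), (par_ne _ _).symm, ?_⟩
    rw [oInt_left_par, ← h, hW]
  have hfin : ∀ T, S = T → S = interior T := fun T h => by rw [← h, hint]
  simp only [mem_insert_iff, mem_singleton_iff] at hmem
  rcases hmem with h | h | h | h | h | h | h | h | h | h
  · exact cIoo ((hfin _ h).trans interior_Icc)
  · exact cIoo ((hfin _ h).trans interior_Ico)
  · exact cIoo ((hfin _ h).trans interior_Ioc)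
  · exact cIoo h
  · exact cIoi ((hfin _ h).trans interior_Ici)
  · exact cIoi h
  · exact cIio ((hfin _ h).trans interior_Iic)
  · exact cIio h
  · exact absurd (h ▸ mem_univ _) hzS
  · exact absurd h hSn.ne_empty

lemma IsPreconnected.subset_of_frontier {A W : Set Circle} (hA : IsPreconnected A)
    (hW : IsOpen W) (hm : (A ∩ W).Nonempty) (hf : ∀ x ∈ A, x ∉ frontier W) : A ⊆ W := by
  refine hA.subset_left_of_subset_union hW (v := (closure W)ᶜ) isClosed_closure.isOpen_compl
    ?_ ?_ hm
  · rw [Set.disjoint_left]; exact fun x h h' => h' (subset_closure h)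
  · intro x hx
    rcases mem_trichotomy hW x with h | h | h
    · exact Or.inl h
    · rw [dual_eq] at h; exact Or.inr h
    · exact absurd h (hf x hx)

/-! ### Lamination systems and their gaps -/

/-- Closure under increasing unions of sequences extends to arbitrary chains, because the circle
is second countable. -/
lemma LamSys.sUnion_mem {L : Set (Set Circle)} (hL : LamSys L) {C : Set (Set Circle)}
    (hC : C ⊆ L) (hch : ∀ I ∈ C, ∀ J ∈ C, I ⊆ J ∨ J ⊆ I) (hnd : IsND (⋃₀ C)) : ⋃₀ C ∈ L := by
  obtain ⟨T, hTc, hTC, hTU⟩ := TopologicalSpace.isOpen_sUnion_countable C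
    fun s hs => (hL.nd s (hC hs)).isOpen
  have hTn : T.Nonempty := by
    obtain ⟨x, hx⟩ := hnd.nonempty
    rw [← hTU] at hx
    obtain ⟨I, hI, -⟩ := hx
    exact ⟨I, hI⟩
  obtain ⟨f, rfl⟩ := hTc.exists_eq_range hTn
  have hf : ∀ n, f n ∈ C := fun n => hTC ⟨n, rfl⟩
  have hp : ∀ n, partialSups f n ∈ C := by
    intro n
    induction n with
    | zero => simpa using hf 0
    | succ n ih =>
      rw [partialSups_add_one]
      rcases hch _ ih _ (hf (n + 1)) with h | h
      · rw [sup_eq_right.2 h]; exact hf _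
      · rw [sup_eq_left.2 h]; exact ih
  have hU : ⋃ n, partialSups f n = ⋃₀ C := by
    rw [← hTU, sUnion_range]
    exact iSup_partialSups_eq f
  rw [← hU] at hnd ⊢
  exact hL.chainUnion _ (fun n => hC (hp n)) (fun n => (partialSups f).monotone n.le_succ) hnd

/-- Two leaves seen from a point `p`: intervals on the far side of `p` are nested or disjoint. -/
lemma LamSys.nested_or_disjoint {L : Set (Set Circle)} (hL : LamSys L) {I J : Set Circle}
    (hI : I ∈ L) (hJ : J ∈ L) {p : Circle} (hpI : p ∈ dual I) (hpJ : p ∉ J) :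
    I ⊆ J ∨ J ⊆ I ∨ Disjoint I J := by
  rcases hL.unlinked I hI J hJ with (h | h) | (h | h)
  · exact Or.inl h
  · exact absurd (h hpI) hpJ
  · exact Or.inr (Or.inr ((disjoint_dual J).mono_right h |>.symm))
  · right; left
    have := dual_anti h
    rwa [(hL.nd _ hI).dual_dual, (hL.nd _ hJ).dual_dual] at this

/-- The members of `F` that contain `x`. -/
def through (F : Set (Set Circle)) (x : Circle) : Set (Set Circle) := {I ∈ F | x ∈ I}

/-- The inclusion-maximal members of `F`. -/
def maxMem (F : Set (Set Circle)) : Set (Set Circle) := {M ∈ F | ∀ J ∈ F, M ⊆ J → J = M}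

/-- Gaps arise as the maximal members of families of nested or disjoint intervals that are closed
under unions of chains and contain a side of every leaf. -/
lemma gap_maxMem {L F : Set (Set Circle)} (hL : LamSys L) (hF : F ⊆ L)
    (h1 : ∀ I ∈ F, ∀ J ∈ F, I ⊆ J ∨ J ⊆ I ∨ Disjoint I J)
    (h2 : ∀ x, (through F x).Nonempty → ⋃₀ through F x ∈ F)
    (h3 : ∀ K ∈ L, K ∈ F ∨ dual K ∈ F) :
    IsGap L (maxMem F) ∧ (∀ I ∈ F, ∃ M ∈ maxMem F, I ⊆ M) ∧ ⋃₀ maxMem F = ⋃₀ F := by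
  have key : ∀ I ∈ F, ∃ M ∈ maxMem F, I ⊆ M := by
    intro I hI
    obtain ⟨x, hx⟩ := (hL.nd I (hF hI)).nonempty
    have hne : I ∈ through F x := ⟨hI, hx⟩
    refine ⟨⋃₀ through F x, ⟨h2 x ⟨I, hne⟩, ?_⟩, subset_sUnion_of_mem hne⟩
    intro J hJ hsub
    exact Subset.antisymm (subset_sUnion_of_mem ⟨hJ, hsub ⟨I, hne, hx⟩⟩) hsub
  refine ⟨⟨fun M hM => hF hM.1, ?_, ?_⟩, key, ?_⟩
  · intro I hI J hJ hne
    rcases h1 I hI.1 J hJ.1 with h | h | h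
    · exact absurd (hI.2 J hJ.1 h).symm hne
    · exact absurd (hJ.2 I hI.1 h) hne
    · exact h.inter_eq
  · intro K hK
    rcases h3 K hK with h | h
    · obtain ⟨M, hM, hs⟩ := key _ h
      exact ⟨M, hM, Or.inl hs⟩
    · obtain ⟨M, hM, hs⟩ := key _ h
      exact ⟨M, hM, Or.inr hs⟩
  · apply Subset.antisymm
    · exact sUnion_subset_sUnion fun M hM => hM.1
    · rintro x ⟨I, hI, hx⟩
      obtain ⟨M, hM, hs⟩ := key _ hI
      exact ⟨M, hM, hs hx⟩

lemma mem_ELset {L : Set (Set Circle)} {I : Set Circle} {x : Circle} (hI : I ∈ L)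
    (hx : x ∈ frontier I) : x ∈ ELset L := by
  simp only [ELset, mem_iUnion]
  exact ⟨I, hI, hx⟩

/-- A vertex of a gap with finitely many vertices is an endpoint of a leaf. -/
lemma vset_subset_ELset {L P : Set (Set Circle)} (hL : LamSys L) (hP : IsGap L P)
    (hfin : (vset P).Finite) {p : Circle} (hp : p ∈ vset P) : p ∈ ELset L := by
  -- a one-sided neighbourhood of `p` avoids the vertices, so lies in one side of the gap
  obtain ⟨t, ht⟩ : ∃ t : ℝ, ∀ s ∈ Ioi t, par p s ∉ vset P := by
    obtain ⟨t, ht⟩ := (hfin.preimage (par_inj p).injOn).bddAbove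
    exact ⟨t, fun s hs hm => not_lt.2 (ht hm) hs⟩
  have hA : ∀ x ∈ oInt (par p t) p, x ∈ ⋃₀ P := by
    intro x hx
    rw [oInt_right_par] at hx
    obtain ⟨s, hs, rfl⟩ := hx
    by_contra hc
    exact ht s hs hc
  obtain ⟨x, hx⟩ := nonempty_oInt (par_ne p t)
  obtain ⟨M, hM, hxM⟩ := hA x hx
  have hMo := (hL.nd M (hP.1 hM)).isOpen
  have hsub : oInt (par p t) p ⊆ M := by
    refine (isPreconnected_oInt (par_ne p t)).subset_of_frontier hMo ⟨x, hx, hxM⟩ ?_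
    intro y hy hyM
    obtain ⟨M', hM', hyM'⟩ := hA y hy
    by_cases heq : M' = M
    · subst heq
      rw [hMo.frontier_eq] at hyM
      exact hyM.2 hyM'
    · have hd := hP.2.1 M' hM' M hM heq
      obtain ⟨z, hz⟩ := mem_closure_iff.1 hyM.1 M' (hL.nd M' (hP.1 hM')).isOpen hyM'
      exact (hd ▸ hz : z ∈ (∅ : Set Circle))
  refine mem_ELset (hP.1 hM) ?_
  rw [hMo.frontier_eq]
  exact ⟨closure_mono hsub (right_mem_closure (par_ne p t)), fun h => hp ⟨M, hM, h⟩⟩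

lemma chain_through {F : Set (Set Circle)}
    (h1 : ∀ I ∈ F, ∀ J ∈ F, I ⊆ J ∨ J ⊆ I ∨ Disjoint I J) (x : Circle) :
    ∀ I ∈ through F x, ∀ J ∈ through F x, I ⊆ J ∨ J ⊆ I := by
  rintro I ⟨hI, hxI⟩ J ⟨hJ, hxJ⟩
  rcases h1 I hI J hJ with h | h | h
  · exact Or.inl h
  · exact Or.inr h
  · exact absurd hxJ (Set.disjoint_left.1 h hxI)

/-- In a very full lamination system, a point that is not an endpoint of a leaf is the limit of
leaves surrounding it: otherwise the maximal intervals avoiding it would form a gap having it as a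
vertex. -/
lemma exists_small {L : Set (Set Circle)} (hL : LamSys L) (hV : VeryFull L) {p : Circle}
    (hp : p ∉ ELset L) {U : Set Circle} (hU : U ∈ 𝓝 p) : ∃ J ∈ L, p ∈ J ∧ closure J ⊆ U := by
  obtain ⟨V, ⟨hV1, hV2⟩, hVU⟩ := (closed_nhds_basis p).mem_iff.1 hU
  obtain ⟨O, hOV, hOo, hpO⟩ := mem_nhds_iff.1 hV1
  by_contra! hno
  have hfr : ∀ J ∈ L, p ∉ J → p ∈ dual J := by
    intro J hJ hpJ
    rcases mem_trichotomy (hL.nd J hJ).isOpen p with h | h | h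
    · exact absurd h hpJ
    · exact h
    · exact absurd (mem_ELset hJ h) hp
  obtain ⟨F, hFdef⟩ : ∃ F, F = {J ∈ L | p ∉ J} := ⟨_, rfl⟩
  have hFL : F ⊆ L := by rw [hFdef]; exact fun J hJ => hJ.1
  have hFp : ∀ J ∈ F, p ∉ J := by rw [hFdef]; exact fun J hJ => hJ.2
  have h1 : ∀ I ∈ F, ∀ J ∈ F, I ⊆ J ∨ J ⊆ I ∨ Disjoint I J := fun I hI J hJ =>
    hL.nested_or_disjoint (hFL hI) (hFL hJ) (hfr I (hFL hI) (hFp I hI)) (hFp J hJ)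
  have h2 : ∀ x, (through F x).Nonempty → ⋃₀ through F x ∈ F := by
    intro x hx
    have hpn : p ∉ ⋃₀ through F x := by
      rintro ⟨I, hI, hpI⟩
      exact hFp I hI.1 hpI
    have ho : ∀ I ∈ through F x, IsOpen I := fun I hI => (hL.nd I (hFL hI.1)).isOpen
    have hxm : x ∈ ⋃₀ through F x := by
      obtain ⟨I, hI⟩ := hx
      exact ⟨I, hI, hI.2⟩
    by_cases hz : ∃ z, z ≠ p ∧ z ∉ ⋃₀ through F x
    · obtain ⟨z, hzp, hz⟩ := hz
      have hnd : IsND (⋃₀ through F x) := by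
        refine isND_of_isOpen (isOpen_sUnion ho) ?_ ⟨x, hxm⟩ hzp hz hpn
        exact isPreconnected_sUnion x _ (fun I hI => hI.2)
          fun I hI => (hL.nd I (hFL hI.1)).isPreconnected
      rw [hFdef] at hpn hnd ⊢
      rw [hFdef] at h1
      exact ⟨hL.sUnion_mem (fun I hI => hI.1.1) (chain_through h1 x) hnd, hpn⟩
    · -- the union is all of `S¹ \ {p}`: by compactness one interval covers the complement of `O`
      exfalso
      push Not at hz
      have hne : Nonempty (through F x) := hx.to_subtype
      obtain ⟨J, hJ⟩ := (hOo.isClosed_compl.isCompact).elim_directed_cover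
        (fun I : through F x => (I : Set Circle)) (fun I => ho _ I.2)
        (by
          intro z hzO
          obtain ⟨I, hI, hzI⟩ := hz z (by rintro rfl; exact hzO hpO)
          exact mem_iUnion.2 ⟨⟨I, hI⟩, hzI⟩)
        (by
          intro I J
          rcases chain_through h1 x I I.2 J J.2 with h | h
          · exact ⟨J, h, Subset.rfl⟩
          · exact ⟨I, Subset.rfl, h⟩)
      have hJL := hFL J.2.1
      refine hno _ (hL.dualMem _ hJL) (hfr _ hJL (hFp _ J.2.1)) ?_
      refine (closure_minimal ?_ hV2).trans hVU
      intro z hz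
      by_contra hzV
      exact Set.disjoint_left.1 (disjoint_dual (J : Set Circle)) (hJ fun h => hzV (hOV h)) hz
  have h3 : ∀ K ∈ L, K ∈ F ∨ dual K ∈ F := by
    intro K hK
    rw [hFdef]
    by_cases h : p ∈ K
    · exact Or.inr ⟨hL.dualMem K hK, Set.disjoint_left.1 (disjoint_dual K) h⟩
    · exact Or.inl ⟨hK, h⟩
  obtain ⟨hG, -, hGU⟩ := gap_maxMem hL hFL h1 h2 h3
  refine hp (vset_subset_ELset hL hG (hV _ hG) ?_)
  rw [vset, hGU]
  rintro ⟨I, hI, hpI⟩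
  exact hFp I hI hpI

/-- If no chain of leaves converges to `dual I` from inside, then there is a non-leaf gap having `I`
as one of its sides. -/
lemma exists_gap {L : Set (Set Circle)} (hL : LamSys L) {I : Set Circle} (hI : I ∈ L)
    (hiso : ∀ C : Set (Set Circle), C ⊆ {J ∈ L | J ⊂ dual I} →
      (∀ A ∈ C, ∀ B ∈ C, A ⊆ B ∨ B ⊆ A) → ⋃₀ C ≠ dual I) :
    ∃ P, IsGap L P ∧ ¬ IsLeafGap P ∧ frontier I ⊆ vset P := by
  have hInd := hL.nd I hI
  have hdI := disjoint_dual I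
  obtain ⟨x₀, hx₀⟩ := hInd.nonempty
  obtain ⟨y₀, hy₀⟩ := (hL.nd _ (hL.dualMem I hI)).nonempty
  have hdI' : ∀ {x}, x ∈ I → x ∉ dual I := fun h => Set.disjoint_left.1 hdI h
  obtain ⟨F, hFdef⟩ : ∃ F, F = {J ∈ L | J ⊆ I ∨ J ⊂ dual I} := ⟨_, rfl⟩
  have hF : ∀ J, J ∈ F ↔ J ∈ L ∧ (J ⊆ I ∨ J ⊂ dual I) := by rw [hFdef]; exact fun J => Iff.rfl
  have hFL : F ⊆ L := fun J hJ => ((hF J).1 hJ).1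
  have h1 : ∀ A ∈ F, ∀ B ∈ F, A ⊆ B ∨ B ⊆ A ∨ Disjoint A B := by
    intro A hA B hB
    obtain ⟨hAL, hA | hA⟩ := (hF A).1 hA <;> obtain ⟨hBL, hB | hB⟩ := (hF B).1 hB
    · exact hL.nested_or_disjoint hAL hBL (dual_anti hA hy₀) fun h => hdI' (hB h) hy₀
    · exact Or.inr (Or.inr (hdI.mono hA hB.1))
    · exact Or.inr (Or.inr (hdI.symm.mono hA.1 hB))
    · refine hL.nested_or_disjoint hAL hBL (p := x₀) ?_ fun h => hdI' hx₀ (hB.1 h)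
      have := dual_anti hA.1
      rw [hInd.dual_dual] at this
      exact this hx₀
  have hIF : I ∈ F := (hF I).2 ⟨hI, Or.inl Subset.rfl⟩
  have h2 : ∀ x, (through F x).Nonempty → ⋃₀ through F x ∈ F := by
    rintro x ⟨J₀, hJ₀⟩
    by_cases hx : x ∈ I
    · have : ⋃₀ through F x = I := by
        apply Subset.antisymm
        · refine sUnion_subset ?_
          rintro J ⟨hJ, hxJ⟩
          rcases ((hF J).1 hJ).2 with h | h
          · exact h
          · exact absurd (h.1 hxJ) (hdI' hx)
        · exact subset_sUnion_of_mem ⟨hIF, hx⟩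
      rw [this]; exact hIF
    · have hsub : ∀ J ∈ through F x, J ⊂ dual I := by
        rintro J ⟨hJ, hxJ⟩
        rcases ((hF J).1 hJ).2 with h | h
        · exact absurd (h hxJ) hx
        · exact h
      have hU : ⋃₀ through F x ⊆ dual I := sUnion_subset fun J hJ => (hsub J hJ).1
      have hnd : IsND (⋃₀ through F x) := by
        obtain ⟨u, v, huv, rfl⟩ := hInd
        rw [dual_oInt huv] at hU
        refine isND_of_isOpen (isOpen_sUnion fun J hJ => (hL.nd J (hFL hJ.1)).isOpen)
          (isPreconnected_sUnion x _ (fun J hJ => hJ.2)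
            fun J hJ => (hL.nd J (hFL hJ.1)).isPreconnected) ⟨x, J₀, hJ₀, hJ₀.2⟩ huv
          (fun h => right_notMem_oInt _ _ (hU h)) (fun h => left_notMem_oInt _ _ (hU h))
      have hch := chain_through h1 x
      refine (hF _).2 ⟨hL.sUnion_mem (fun J hJ => hFL hJ.1) hch hnd, Or.inr ?_⟩
      exact hU.ssubset_of_ne (hiso _ (fun J hJ => ⟨hFL hJ.1, hsub J hJ⟩) hch)
  have h3 : ∀ K ∈ L, K ∈ F ∨ dual K ∈ F := by
    intro K hK
    have hK' := hL.dualMem K hK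
    rcases hL.unlinked K hK I hI with (h | h) | (h | h)
    · exact Or.inl ((hF _).2 ⟨hK, Or.inl h⟩)
    · exact Or.inr ((hF _).2 ⟨hK', Or.inl h⟩)
    · by_cases he : K = dual I
      · right; rw [he, hInd.dual_dual]; exact hIF
      · exact Or.inl ((hF _).2 ⟨hK, Or.inr (h.ssubset_of_ne he)⟩)
    · by_cases he : dual K = dual I
      · left
        rw [← (hL.nd K hK).dual_dual, he, hInd.dual_dual]; exact hIF
      · exact Or.inr ((hF _).2 ⟨hK', Or.inr (h.ssubset_of_ne he)⟩)
  obtain ⟨hG, -, hGU⟩ := gap_maxMem hL hFL h1 h2 h3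
  have hIG : I ∈ maxMem F := by
    refine ⟨hIF, fun J hJ hIJ => ?_⟩
    rcases ((hF J).1 hJ).2 with h | h
    · exact Subset.antisymm h hIJ
    · exact absurd (h.1 (hIJ hx₀)) (hdI' hx₀)
  have hdG : dual I ∉ maxMem F := by
    intro h
    rcases ((hF _).1 h.1).2 with h | h
    · exact hdI' (h hy₀) hy₀
    · exact h.ne rfl
  refine ⟨maxMem F, hG, ?_, ?_⟩
  · rintro ⟨A, hA⟩
    have hIA : I ∈ leafOf A := hA ▸ hIG
    have hAm : A ∈ maxMem F := by rw [hA]; exact Or.inl rfl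
    have hAm' : dual A ∈ maxMem F := by rw [hA]; exact Or.inr rfl
    rcases hIA with h | h
    · rw [h] at hdG; exact hdG hAm'
    · rw [mem_singleton_iff.1 h, (hL.nd A (hFL hAm.1)).dual_dual] at hdG; exact hdG hAm
  · intro x hx
    rw [vset, hGU]
    rintro ⟨J, hJ, hxJ⟩
    rcases ((hF J).1 hJ).2 with h | h
    · rw [hInd.isOpen.frontier_eq] at hx
      exact hx.2 (h hxJ)
    · rw [← hInd.frontier_dual, (hL.nd _ (hL.dualMem I hI)).isOpen.frontier_eq] at hx
      exact hx.2 (h.1 hxJ)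

/-! ### Dynamics of one element near consecutive fixed points -/

/-- `a` and `b` are consecutive fixed points of `g`, in the positive direction. -/
def Adj (g : Circle ≃ₜ Circle) (a b : Circle) : Prop :=
  a ≠ b ∧ g a = a ∧ g b = b ∧ ∀ x ∈ oInt a b, g x ≠ x

/-- The endpoints of an interval preserved by `g` are fixed by `g`. -/
lemma fixed_of_mem_frontier {g : Circle ≃ₜ Circle} (hg : OrientPres g) {W : Set Circle}
    (hW : IsND W) (hgW : g '' W = W) {y : Circle} (hy : y ∈ frontier W) : g y = y := by
  obtain ⟨u, v, huv, rfl⟩ := hW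
  have himg : ∀ z ∈ frontier (oInt u v), g z ∈ frontier (oInt u v) := by
    intro z hz
    have : g z ∈ g '' frontier (oInt u v) := ⟨z, hz, rfl⟩
    rwa [g.image_frontier, hgW] at this
  rw [frontier_oInt huv] at himg hy
  have hu := himg u (Or.inl rfl)
  have hv := himg v (Or.inr rfl)
  -- the two endpoints cannot be exchanged, as `g` preserves orientation
  have hnsw : ¬ (g u = v ∧ g v = u) := by
    rintro ⟨h1, h2⟩
    obtain ⟨x, hx⟩ := nonempty_oInt huv
    have h3 : g x ∈ oInt v u := by
      have := hg _ _ _ hx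
      rwa [h1, h2] at this
    have h4 : g x ∈ oInt u v := by
      rw [← hgW]; exact ⟨x, hx, rfl⟩
    exact Set.disjoint_left.1 (oInt_disjoint u v) h4 h3
  have hne : g u ≠ g v := fun h => huv (g.injective h)
  simp only [mem_insert_iff, mem_singleton_iff] at hu hv hy
  rcases hu with hu | hu <;> rcases hv with hv | hv
  · exact absurd (hu.trans hv.symm) hne
  · rcases hy with rfl | rfl <;> assumption
  · exact absurd ⟨hu, hv⟩ hnsw
  · exact absurd (hu.trans hv.symm) hne

/-- The images of a leaf that `g` expands increase to a leaf with fixed endpoints, as soon as `g`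
has one fixed point inside and two outside. -/
lemma exists_limit {L : Set (Set Circle)} (hL : LamSys L) {g : Circle ≃ₜ Circle}
    (hg : OrientPres g) (hinv : ∀ I ∈ L, g '' I ∈ L) {K : Set Circle} (hK : K ∈ L)
    (hsub : K ⊆ g '' K) {x y z : Circle} (hx : g x = x) (hxK : x ∈ K) (hyz : y ≠ z)
    (hy : g y = y) (hyK : y ∉ K) (hz : g z = z) (hzK : z ∉ K) :
    ∃ W ∈ L, (∀ w, g w = w → (w ∈ W ↔ w ∈ K)) ∧ ∀ w ∈ frontier W, g w = w := by
  obtain ⟨f, hf0, hfs⟩ : ∃ f : ℕ → Set Circle, f 0 = K ∧ ∀ n, f (n + 1) = g '' f n :=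
    ⟨fun n => (fun S => g '' S)^[n] K, rfl, fun n => Function.iterate_succ_apply' _ n K⟩
  have hfL : ∀ n, f n ∈ L := by
    intro n
    induction n with
    | zero => rw [hf0]; exact hK
    | succ n ih => rw [hfs]; exact hinv _ ih
  have hmono : ∀ n, f n ⊆ f (n + 1) := by
    intro n
    induction n with
    | zero => rw [hfs, hf0]; exact hsub
    | succ n ih =>
      rw [hfs n, hfs (n + 1)]; exact image_mono ih
  have hfix : ∀ w, g w = w → ∀ n, w ∈ f n ↔ w ∈ K := by
    intro w hw n
    induction n with
    | zero => rw [hf0]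
    | succ n ih =>
      rw [hfs, ← ih]
      conv_lhs => rw [← hw]
      exact g.injective.mem_set_image
  have hfixU : ∀ w, g w = w → (w ∈ ⋃ n, f n ↔ w ∈ K) := by
    intro w hw
    rw [mem_iUnion]
    exact ⟨fun ⟨n, hn⟩ => (hfix w hw n).1 hn, fun h => ⟨0, (hfix w hw 0).2 h⟩⟩
  have hnd : IsND (⋃ n, f n) := by
    refine isND_of_isOpen (isOpen_iUnion fun n => (hL.nd _ (hfL n)).isOpen) ?_
      ⟨x, (hfixU x hx).2 hxK⟩ hyz (fun h => hyK ((hfixU y hy).1 h))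
      (fun h => hzK ((hfixU z hz).1 h))
    exact isPreconnected_iUnion ⟨x, mem_iInter.2 fun n => (hfix x hx n).2 hxK⟩
      fun n => (hL.nd _ (hfL n)).isPreconnected
  have hgU : g '' (⋃ n, f n) = ⋃ n, f n := by
    rw [image_iUnion]
    simp only [← hfs]
    exact (Monotone.iUnion_nat_add (monotone_nat_of_le_succ hmono) 1)
  exact ⟨_, hL.chainUnion f hfL hmono hnd, hfixU, fun w hw => fixed_of_mem_frontier hg hnd hgU hw⟩

lemma mem_or_of_mem_closure_oInt {a b y : Circle} (hab : a ≠ b) (hy : y ∈ closure (oInt a b)) :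
    y ∈ oInt a b ∨ y = a ∨ y = b := by
  rw [closure_oInt hab] at hy
  by_cases h : y ∈ oInt a b
  · exact Or.inl h
  · exact Or.inr (oInt_cover hab h hy)

/-- An interval with fixed endpoints that separates two consecutive fixed points has one of them
as an endpoint. -/
lemma Adj.right_mem_frontier {g : Circle ≃ₜ Circle} {a b : Circle} (h : Adj g a b)
    {W : Set Circle} (hW : IsOpen W) (hf : ∀ w ∈ frontier W, g w = w) (ha : a ∈ W)
    (hb : b ∉ W) : b ∈ frontier W := by
  by_contra hc
  refine hb ((isPreconnected_oInt h.1).closure.subset_of_frontier hW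
    ⟨a, left_mem_closure h.1, ha⟩ ?_ (right_mem_closure h.1))
  intro y hy hyW
  rcases mem_or_of_mem_closure_oInt h.1 hy with hy | rfl | rfl
  · exact h.2.2.2 y hy (hf y hyW)
  · rw [hW.frontier_eq] at hyW; exact hyW.2 ha
  · exact hc hyW

lemma Adj.left_mem_frontier {g : Circle ≃ₜ Circle} {a b : Circle} (h : Adj g a b)
    {W : Set Circle} (hW : IsOpen W) (hf : ∀ w ∈ frontier W, g w = w) (ha : a ∉ W)
    (hb : b ∈ W) : a ∈ frontier W := by
  by_contra hc
  refine ha ((isPreconnected_oInt h.1).closure.subset_of_frontier hW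
    ⟨b, right_mem_closure h.1, hb⟩ ?_ (left_mem_closure h.1))
  intro y hy hyW
  rcases mem_or_of_mem_closure_oInt h.1 hy with hy | rfl | rfl
  · exact h.2.2.2 y hy (hf y hyW)
  · exact hc hyW
  · rw [hW.frontier_eq] at hyW; exact hyW.2 hb

lemma image_dual (g : Circle ≃ₜ Circle) (I : Set Circle) : g '' dual I = dual (g '' I) := by
  rw [dual, dual, g.image_interior, g.image_compl]

lemma inv_apply_eq_iff (g : Circle ≃ₜ Circle) (x : Circle) :
    (g⁻¹ : Circle ≃ₜ Circle) x = x ↔ g x = x := by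
  change g.symm x = x ↔ g x = x
  rw [g.symm_apply_eq, eq_comm]

lemma inv_image_image (g : Circle ≃ₜ Circle) (S : Set Circle) :
    (g⁻¹ : Circle ≃ₜ Circle) '' (g '' S) = S := by
  change g.symm '' (g '' S) = S
  exact g.toEquiv.symm_image_image S

/-- A leaf separating fixed points of `g` is contracted by `g` or by its inverse. -/
lemma exists_contracting {G : Subgroup (Circle ≃ₜ Circle)} {L : Set (Set Circle)}
    (hL : LamSys L) (hinv : GInv G L) {g : Circle ≃ₜ Circle} (hg : g ∈ G) {J : Set Circle}
    (hJ : J ∈ L) {p b : Circle} (hp : g p = p) (hpJ : p ∈ dual J) (hb : g b = b) (hbJ : b ∈ J) :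
    ∃ h ∈ G, (∀ x, h x = x ↔ g x = x) ∧ J ⊆ (h⁻¹ : Circle ≃ₜ Circle) '' J ∧
      dual J ⊆ h '' dual J := by
  have aux : ∀ h ∈ G, (∀ x, h x = x ↔ g x = x) → h '' J ⊆ J →
      ∃ h ∈ G, (∀ x, h x = x ↔ g x = x) ∧ J ⊆ (h⁻¹ : Circle ≃ₜ Circle) '' J ∧
        dual J ⊆ h '' dual J := by
    intro h hh hfix hs
    refine ⟨h, hh, hfix, ?_, ?_⟩
    · have := image_mono (f := (h⁻¹ : Circle ≃ₜ Circle)) hs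
      rwa [inv_image_image] at this
    · rw [image_dual]; exact dual_anti hs
  have hpn : p ∉ g '' J := by
    rw [← hp, g.injective.mem_set_image]
    exact fun h => Set.disjoint_left.1 (disjoint_dual J) h hpJ
  have hbg : b ∈ g '' J := ⟨b, hbJ, hb⟩
  rcases hL.nested_or_disjoint hJ (hinv g hg J hJ) hpJ hpn with h | h | h
  · refine aux g⁻¹ (G.inv_mem hg) (inv_apply_eq_iff g) ?_
    have := image_mono (f := (g⁻¹ : Circle ≃ₜ Circle)) h
    rwa [inv_image_image] at this
  · exact aux g hg (fun _ => Iff.rfl) h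
  · exact absurd hbg (Set.disjoint_left.1 h hbJ)

/-- If `a`, `b` are consecutive fixed points and `b` is not an endpoint of a leaf, then `b` is
followed by a next fixed point `c`, and `(a, c)` is a leaf. A small leaf around `b` is contracted
by some `h ∈ {g, g⁻¹}`; its complement must swallow every other fixed point under iteration of `h`
(otherwise `b` would become an endpoint), and under `h⁻¹` it grows to `(a, c)`. -/
lemma Adj.next {G : Subgroup (Circle ≃ₜ Circle)} {L : Set (Set Circle)}
    (hor : ∀ g ∈ G, OrientPres g) (hL : LamSys L) (hV : VeryFull L) (hinv : GInv G L)
    {g : Circle ≃ₜ Circle} (hg : g ∈ G) (hinf : {x : Circle | g x = x}.Infinite)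
    {a b : Circle} (hab : Adj g a b) (hb : b ∉ ELset L) :
    ∃ c, Adj g b c ∧ a ≠ c ∧ oInt a c ∈ L ∧ ∀ x, g x = x → (x ∈ oInt a c ↔ x = b) := by
  obtain ⟨hne, ha, hgb, -⟩ := id hab
  obtain ⟨z, hz, hzab⟩ := hinf.exists_notMem_finite (toFinite {a, b})
  have hza : z ≠ a := fun h => hzab (Or.inl h)
  have hzb : z ≠ b := fun h => hzab (Or.inr h)
  replace hz : g z = z := hz
  have hU : ({a, z} : Set Circle)ᶜ ∈ 𝓝 b :=
    (toFinite {a, z}).isClosed.isOpen_compl.mem_nhds (by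
      rintro (h | h)
      · exact hne h.symm
      · exact hzb h.symm)
  obtain ⟨J, hJ, hbJ, hJU⟩ := exists_small hL hV hb hU
  have hJo := (hL.nd J hJ).isOpen
  have haJ : a ∈ dual J := by rw [dual_eq]; exact fun h => hJU h (Or.inl rfl)
  have hzJ : z ∈ dual J := by rw [dual_eq]; exact fun h => hJU h (Or.inr rfl)
  have hdis : ∀ {x}, x ∈ J → x ∉ dual J := fun h => Set.disjoint_left.1 (disjoint_dual J) h
  obtain ⟨h, hh, hfix, hexp, hexp'⟩ := exists_contracting hL hinv hg hJ ha haJ hgb hbJ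
  have hall : ∀ x, g x = x → x ≠ b → x ∈ dual J := by
    intro x hx hxb
    by_contra hxJ
    obtain ⟨W, hW, hWf, hWfr⟩ := exists_limit hL (hor h hh) (hinv h hh) (hL.dualMem J hJ) hexp'
      ((hfix a).2 ha) haJ hxb ((hfix x).2 hx) hxJ ((hfix b).2 hgb) (hdis hbJ)
    refine hb (mem_ELset hW (hab.right_mem_frontier (hL.nd W hW).isOpen
      (fun w hw => (hfix w).1 (hWfr w hw)) ((hWf a ((hfix a).2 ha)).2 haJ) ?_))
    exact fun hbW => hdis hbJ ((hWf b ((hfix b).2 hgb)).1 hbW)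
  have hfix' : ∀ x, (h⁻¹ : Circle ≃ₜ Circle) x = x ↔ g x = x := fun x =>
    (inv_apply_eq_iff h x).trans (hfix x)
  have hh' := G.inv_mem hh
  obtain ⟨V, hVL, hVf, hVfr⟩ := exists_limit hL (hor _ hh') (hinv _ hh') hJ hexp
    ((hfix' b).2 hgb) hbJ hza ((hfix' z).2 hz) (fun h => hdis h hzJ) ((hfix' a).2 ha)
    (fun h => hdis h haJ)
  have hVb : ∀ x, g x = x → (x ∈ V ↔ x = b) := by
    intro x hx
    rw [hVf x ((hfix' x).2 hx)]
    constructor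
    · intro hxJ
      by_contra hxb
      exact hdis hxJ (hall x hx hxb)
    · rintro rfl; exact hbJ
  have hVg : ∀ w ∈ frontier V, g w = w := fun w hw => (hfix' w).1 (hVfr w hw)
  have haV : a ∈ frontier V := hab.left_mem_frontier (hL.nd V hVL).isOpen hVg
    (fun h => hne ((hVb a ha).1 h)) ((hVb b hgb).2 rfl)
  have hbV : b ∈ V := (hVb b hgb).2 rfl
  obtain ⟨u, v, huv, rfl⟩ := hL.nd V hVL
  rw [frontier_oInt huv] at haV hVg
  rcases haV with rfl | haV
  · refine ⟨v, ⟨hbV.2.1, hgb, hVg v (Or.inr rfl), ?_⟩, huv, hVL, hVb⟩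
    intro x hx hgx
    -- `x` lies in `(b, v)`, hence in `(a, v)`, where `b` is the only fixed point
    have h1 : posOri v b x := posOri.rot (posOri.rot hx)
    have h2 : posOri v a b := posOri.rot (posOri.rot hbV)
    exact hx.1 ((hVb x hgx).1 (h2.trans h1).rot).symm
  · rw [mem_singleton_iff] at haV
    subst haV
    exact absurd (hVg u (Or.inl rfl)) (hab.2.2.2 u (posOri.rot (posOri.rot hbV)))

/-- A nontrivial homeomorphism with infinitely many fixed points has two consecutive ones: the
nearest fixed points on the two sides of any moved point. -/
lemma exists_adj {g : Circle ≃ₜ Circle} (hne : g ≠ 1) (hinf : {x : Circle | g x = x}.Infinite) :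
    ∃ a b, Adj g a b := by
  obtain ⟨x, hx⟩ : ∃ x, g x ≠ x := by
    by_contra! h
    exact hne (Homeomorph.ext h)
  have hcl : IsClosed {y : Circle | g y = y} := isClosed_eq g.continuous continuous_id
  have hcont : ContinuousOn (crd x) {y : Circle | g y = y} :=
    (continuousOn_crd x).mono fun y hy hyx => hx (by
      rw [mem_singleton_iff] at hyx; exact hyx ▸ hy)
  -- the fixed points nearest to the moved point `x` on its two sides
  obtain ⟨a, ha, hamax⟩ := hcl.isCompact.exists_isMaxOn hinf.nonempty hcont
  obtain ⟨b, hb, hbmin⟩ := hcl.isCompact.exists_isMinOn hinf.nonempty hcont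
  have hnex : ∀ {y}, g y = y → y ≠ x := fun hy h => hx (h ▸ hy)
  have hlt : ∀ {y z}, g y = y → g z = z → y ≠ z → crd x y ≤ crd x z → posOri x y z := by
    intro y z hy hz hyz hle
    exact ⟨(hnex hy).symm, hyz, hnex hz,
      lt_of_le_of_ne hle fun h => hyz (crd_inj (hnex hy) (hnex hz) h)⟩
  obtain ⟨z, hz, hzab⟩ := hinf.exists_notMem_finite (toFinite {a})
  have hza : z ≠ a := fun h => hzab h
  refine ⟨a, b, ?_, ha, hb, ?_⟩
  · rintro rfl
    exact (hlt hz ha hza (hamax hz)).asymm (hlt ha hz hza.symm (hbmin hz))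
  · intro y hy hgy
    have h1 : posOri x b y := hlt hb hgy hy.2.1.symm (hbmin hgy)
    have h2 : posOri x y a := hlt hgy ha hy.1.symm (hamax hgy)
    have h3 : posOri y a b := h2.rot.trans h1.rot.rot
    exact h3.asymm (posOri.rot hy)

/-- A finite set of fixed points that is closed under passing to the next fixed point contains all
of them: from any other fixed point `y`, the last point of the set before `y` would have its
successor beyond `y`. -/
lemma fixed_subset_of_succ {g : Circle ≃ₜ Circle} {S : Set Circle} (hS : S.Finite)
    (hne : S.Nonempty) (hsucc : ∀ s ∈ S, ∃ s' ∈ S, Adj g s s') : {x : Circle | g x = x} ⊆ S := by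
  intro y hy
  by_contra hyS
  obtain ⟨s, hs, hmax⟩ := Set.exists_max_image S (crd y) hS hne
  obtain ⟨s', hs', hadj⟩ := hsucc s hs
  have h1 : y ≠ s := fun h => hyS (h ▸ hs)
  have h2 : s' ≠ y := fun h => hyS (h ▸ hs')
  rcases posOri_total h1 hadj.1 h2 with h | h
  · exact not_le.2 h.2.2.2 (hmax s' hs')
  · exact hadj.2.2.2 y (posOri.rot (posOri.rot h)) hy

/-! ### A polygon with infinitely many vertices -/

/-- Think of `q₀ < q₁ < q₂ < q₃ < q₄ < q₅` as consecutive fixed points, where `q₀` is not an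
endpoint of a leaf and `(q₃, q₅)` is a leaf; what is used of consecutiveness is that `q₀`, `q₁` are
adjacent and that `q₂`, `q₄` are the only fixed points in `(q₁, q₃)`, `(q₃, q₅)`. Then no chain of
leaves increases to `(q₃, q₁)`: such leaves would eventually share the endpoint `q₃`, and the
dynamics would turn one of them into a leaf ending at `q₀`. -/
lemma not_limit {G : Subgroup (Circle ≃ₜ Circle)} {L : Set (Set Circle)}
    (hor : ∀ g ∈ G, OrientPres g) (hL : LamSys L) (hinv : GInv G L)
    {g : Circle ≃ₜ Circle} (hg : g ∈ G) {q₀ q₁ q₂ q₃ q₄ q₅ : Circle} (h01 : Adj g q₀ q₁)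
    (hq₂ : g q₂ = q₂) (hq₄ : g q₄ = q₄)
    (n02 : q₀ ≠ q₂) (n03 : q₀ ≠ q₃) (n04 : q₀ ≠ q₄) (n13 : q₁ ≠ q₃) (n14 : q₁ ≠ q₄)
    (n24 : q₂ ≠ q₄) (n34 : q₃ ≠ q₄) (n35 : q₃ ≠ q₅)
    (hIf : ∀ x, g x = x → (x ∈ oInt q₁ q₃ ↔ x = q₂))
    (hI' : oInt q₃ q₅ ∈ L) (hIf' : ∀ x, g x = x → (x ∈ oInt q₃ q₅ ↔ x = q₄))
    (hq₀ : q₀ ∉ ELset L) (C : Set (Set Circle)) (hC : C ⊆ {J ∈ L | J ⊂ dual (oInt q₁ q₃)})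
    (hch : ∀ A ∈ C, ∀ B ∈ C, A ⊆ B ∨ B ⊆ A) : ⋃₀ C ≠ dual (oInt q₁ q₃) := by
  intro hU
  have hmem : ∀ x, g x = x → x ≠ q₁ → x ≠ q₃ → x ≠ q₂ → x ∈ ⋃₀ C := by
    intro x hx h1 h3 h2
    rw [hU, dual_oInt n13]
    by_contra hc
    rcases oInt_cover n13 (fun h => h2 ((hIf x hx).1 h)) hc with h | h
    · exact h1 h
    · exact h3 h
  obtain ⟨hn01, hg₀, hg₁, -⟩ := id h01
  obtain ⟨J, hJC, h0J, h4J⟩ : ∃ J ∈ C, q₀ ∈ J ∧ q₄ ∈ J := by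
    obtain ⟨A, hA, h0A⟩ := hmem q₀ hg₀ hn01 n03 n02
    obtain ⟨B, hB, h4B⟩ := hmem q₄ hq₄ n14.symm n34.symm n24.symm
    rcases hch A hA B hB with h | h
    · exact ⟨B, hB, h h0A, h4B⟩
    · exact ⟨A, hA, h0A, h h4B⟩
  obtain ⟨hJ, hJI⟩ := hC hJC
  have hJnd := hL.nd J hJ
  have hdis : ∀ {x}, x ∈ J → x ∉ dual J := fun h => Set.disjoint_left.1 (disjoint_dual J) h
  have hIJ : oInt q₁ q₃ ⊆ dual J := by
    have := dual_anti hJI.1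
    rwa [dual_oInt n13, dual_oInt n13.symm] at this
  have h2I : q₂ ∈ oInt q₁ q₃ := (hIf q₂ hq₂).2 rfl
  have h4I' : q₄ ∈ oInt q₃ q₅ := (hIf' q₄ hq₄).2 rfl
  have hI'J : oInt q₃ q₅ ⊆ J := by
    rcases hL.unlinked J hJ _ hI' with (h | h) | (h | h)
    · exact absurd ((hIf' q₀ hg₀).1 (h h0J)) n04
    · exact absurd ((hIf' q₂ hq₂).1 (h (hIJ h2I))) n24
    · exact absurd (h h4J) (Set.disjoint_left.1 (disjoint_dual _) h4I')
    · have := dual_anti h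
      rwa [hJnd.dual_dual, dual_oInt n35, dual_oInt n35.symm] at this
  -- `J` ends at `q₃`; if it also ended at `q₁`, it would be a side of the leaf `(q₁, q₃)`
  have h1J : q₁ ∈ dual J := by
    have h3J : q₃ ∈ frontier J := by
      rw [hJnd.isOpen.frontier_eq]
      refine ⟨closure_mono hI'J (left_mem_closure n35), fun h => ?_⟩
      have := hJI.1 h
      rw [dual_oInt n13] at this
      exact left_notMem_oInt _ _ this
    rcases mem_trichotomy hJnd.isOpen q₁ with h | h | h
    · have := hJI.1 h
      rw [dual_oInt n13] at this
      exact absurd this (right_notMem_oInt _ _)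
    · exact h
    · rcases hJnd.eq_of_mem_frontier n13 h h3J with h | h
      · exact absurd (hIJ h2I) (hdis (h ▸ h2I))
      · rw [dual_oInt n13] at hJI
        exact absurd h hJI.ne
  obtain ⟨h, hh, hfix, -, hexp⟩ := exists_contracting hL hinv hg hJ hq₂ (hIJ h2I) hg₀ h0J
  obtain ⟨W, hW, hWf, hWfr⟩ := exists_limit hL (hor h hh) (hinv h hh) (hL.dualMem J hJ) hexp
    ((hfix q₁).2 hg₁) h1J n04 ((hfix q₀).2 hg₀) (hdis h0J) ((hfix q₄).2 hq₄) (hdis h4J)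
  refine hq₀ (mem_ELset hW (h01.left_mem_frontier (hL.nd W hW).isOpen
    (fun w hw => (hfix w).1 (hWfr w hw)) ?_ ((hWf q₁ ((hfix q₁).2 hg₁)).2 h1J)))
  exact fun h0 => hdis h0J ((hWf q₀ ((hfix q₀).2 hg₀)).1 h0)

/-- If `g` has infinitely many fixed points, there is an infinite sequence of consecutive ones,
in which points of index `n` and `n + 2` span a leaf of one or the other lamination system
according to the parity of `n`. -/
lemma exists_seq {G : Subgroup (Circle ≃ₜ Circle)} {L : Bool → Set (Set Circle)}
    (hor : ∀ g ∈ G, OrientPres g) (hL : ∀ i, LamSys (L i)) (hV : ∀ i, VeryFull (L i))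
    (hinv : ∀ i, GInv G (L i)) (hdisj : ∀ i x, x ∈ ELset (L i) → x ∉ ELset (L !i))
    {g : Circle ≃ₜ Circle} (hg : g ∈ G) (hne : g ≠ 1)
    (hinf : {x : Circle | g x = x}.Infinite) :
    ∃ (p : ℕ → Circle) (i : ℕ → Bool), (∀ n, i (n + 1) = !(i n)) ∧ Function.Injective p ∧
      (∀ n, Adj g (p n) (p (n + 1))) ∧ ∀ n, oInt (p n) (p (n + 2)) ∈ L (i n) ∧
        ∀ x, g x = x → (x ∈ oInt (p n) (p (n + 2)) ↔ x = p (n + 1)) := by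
  -- a state records two consecutive fixed points and a system having no leaf end at the second
  have hstep : ∀ s : {s : Circle × Circle × Bool // Adj g s.1 s.2.1 ∧ s.2.1 ∉ ELset (L s.2.2)},
      ∃ t : {s : Circle × Circle × Bool // Adj g s.1 s.2.1 ∧ s.2.1 ∉ ELset (L s.2.2)},
        t.1.1 = s.1.2.1 ∧ t.1.2.2 = (!s.1.2.2) ∧ oInt s.1.1 t.1.2.1 ∈ L s.1.2.2 ∧
          ∀ x, g x = x → (x ∈ oInt s.1.1 t.1.2.1 ↔ x = s.1.2.1) := by
    rintro ⟨⟨a, b, i⟩, hab, hb⟩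
    obtain ⟨c, hbc, hac, hIL, hIf⟩ := hab.next hor (hL i) (hV i) (hinv i) hg hinf hb
    refine ⟨⟨⟨b, c, !i⟩, hbc, hdisj i c (mem_ELset hIL ?_)⟩, rfl, rfl, hIL, hIf⟩
    rw [frontier_oInt hac]; exact Or.inr rfl
  choose nxt hn1 hn2 hn3 hn4 using hstep
  obtain ⟨a, b, hab⟩ := exists_adj hne hinf
  obtain ⟨i₀, hi₀⟩ : ∃ i, b ∉ ELset (L i) := by
    by_cases h : b ∈ ELset (L true)
    · exact ⟨_, hdisj _ _ h⟩
    · exact ⟨_, h⟩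
  obtain ⟨s, hs⟩ : ∃ s : ℕ → {s : Circle × Circle × Bool //
      Adj g s.1 s.2.1 ∧ s.2.1 ∉ ELset (L s.2.2)}, ∀ n, s (n + 1) = nxt (s n) :=
    ⟨fun n => nxt^[n] ⟨⟨a, b, i₀⟩, hab, hi₀⟩, fun n => Function.iterate_succ_apply' _ n _⟩
  have hb : ∀ n, (s n).1.2.1 = (s (n + 1)).1.1 := fun n => by rw [hs, hn1]
  have hadj : ∀ n, Adj g (s n).1.1 (s (n + 1)).1.1 := fun n => hb n ▸ (s n).2.1
  refine ⟨fun n => (s n).1.1, fun n => (s n).1.2.2, fun n => ?_, ?_, hadj, fun n => ?_⟩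
  · change (s (n + 1)).1.2.2 = _
    rw [hs, hn2]
  · -- a repetition would make a finite initial segment closed under successors
    have hnew : ∀ m n, m ≤ n → (s (n + 1)).1.1 ≠ (s m).1.1 := by
      intro m n hmn heq
      refine hinf (((finite_Iic n).image fun k => (s k).1.1).subset
        (fixed_subset_of_succ ((finite_Iic n).image fun k => (s k).1.1) ⟨_, n, le_refl n, rfl⟩ ?_))
      rintro _ ⟨k, hk, rfl⟩
      rcases (mem_Iic.1 hk).lt_or_eq with hlt | rfl
      · exact ⟨_, ⟨k + 1, hlt, rfl⟩, hadj k⟩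
      · refine ⟨_, ⟨m, hmn, rfl⟩, ?_⟩
        have := hadj k
        rwa [heq] at this
    intro m n hmn
    by_contra hc
    rcases lt_or_gt_of_ne hc with h | h
    · obtain ⟨k, rfl⟩ := Nat.exists_eq_add_of_lt h
      exact hnew m (m + k) (by omega) hmn.symm
    · obtain ⟨k, rfl⟩ := Nat.exists_eq_add_of_lt h
      exact hnew n (n + k) (by omega) hmn
  · have h3 := hn3 (s n)
    have h4 := hn4 (s n)
    rw [← hs, hb (n + 1)] at h3 h4
    rw [hb n] at h4
    exact ⟨h3, h4⟩

/-- The theorem for two lamination systems indexed by `Bool`, so that the roles of the two systems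
can alternate along the sequence of fixed points. -/
lemma finite_fixed_aux {G : Subgroup (Circle ≃ₜ Circle)} {L : Bool → Set (Set Circle)}
    (hor : ∀ g ∈ G, OrientPres g) (hL : ∀ i, LamSys (L i)) (hV : ∀ i, VeryFull (L i))
    (hlo : ∀ i, Loose (L i))
    (hinv : ∀ i, GInv G (L i)) (hdisj : ∀ i x, x ∈ ELset (L i) → x ∉ ELset (L !i))
    {g : Circle ≃ₜ Circle} (hg : g ∈ G) (hne : g ≠ 1) : {x : Circle | g x = x}.Finite := by
  by_contra hinf
  obtain ⟨p, i, hi, hinj, hadj, hleaf⟩ := exists_seq hor hL hV hinv hdisj hg hne hinf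
  have hi2 : ∀ n, i (n + 2) = i n := fun n => by rw [hi, hi, Bool.not_not]
  have hpn : ∀ {m n}, m ≠ n → p m ≠ p n := fun h h' => h (hinj h')
  have hend : ∀ n, p n ∈ ELset (L (i n)) := fun n => mem_ELset (hleaf n).1 (by
    rw [frontier_oInt (hpn (by omega))]; exact Or.inl rfl)
  have hgap : ∀ n, ∃ P, IsGap (L (i (n + 1))) P ∧ ¬ IsLeafGap P ∧ p (n + 1) ∈ vset P ∧
      p (n + 3) ∈ vset P := by
    intro n
    obtain ⟨hIL, hIf⟩ := hleaf (n + 1)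
    obtain ⟨hIL', hIf'⟩ := hleaf (n + 3)
    rw [show i (n + 3) = i (n + 1) from hi2 (n + 1)] at hIL'
    have h0 : p n ∉ ELset (L (i (n + 1))) := by
      rw [hi]; exact hdisj _ _ (hend n)
    obtain ⟨P, hP, hPl, hPv⟩ := exists_gap (hL _) hIL
      (not_limit hor (hL _) (hinv _) hg (hadj n) (hadj (n + 2)).2.1 (hadj (n + 4)).2.1
        (hpn (by omega)) (hpn (by omega)) (hpn (by omega)) (hpn (by omega)) (hpn (by omega))
        (hpn (by omega)) (hpn (by omega)) (hpn (by omega)) hIf hIL' hIf' h0)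
    rw [frontier_oInt (hpn (by omega))] at hPv
    exact ⟨P, hP, hPl, hPv (Or.inl rfl), hPv (Or.inr rfl)⟩
  choose P hP hPl hPv hPv' using hgap
  have hodd : ∀ k, i (2 * k + 1) = i 1 := by
    intro k
    induction k with
    | zero => rfl
    | succ k ih => rw [← ih]; exact hi2 (2 * k + 1)
  -- consecutive gaps of the same system share a vertex, so looseness identifies them
  have heq : ∀ k, P (2 * k) = P 0 := by
    intro k
    induction k with
    | zero => rfl
    | succ k ih =>
      rw [← ih]
      by_contra hc
      have h1 := hP (2 * k)
      have h2 := hP (2 * (k + 1))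
      rw [hodd] at h1 h2
      have h3 := hlo (i 1) _ _ h2 h1 (hPl _) (hPl _) hc
      have h4 : p (2 * k + 3) ∈ vset (P (2 * (k + 1))) ∩ vset (P (2 * k)) :=
        ⟨hPv (2 * (k + 1)), hPv' (2 * k)⟩
      rw [h3] at h4
      exact h4
  refine Set.infinite_of_injective_forall_mem (f := fun k => p (2 * k + 1)) ?_ ?_
    (hV _ _ (hP 0))
  · intro k l hkl
    have := hinj hkl
    omega
  · intro k
    rw [← heq k]
    exact hPv (2 * k)

/-- In a pseudo-fibered triple, every nontrivial element of `G` has only finitely many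
fixed points. -/
theorem stmt19 (L₁ L₂ : Set (Set Circle)) (G : Subgroup (Circle ≃ₜ Circle))
    (hpf : PFib L₁ L₂ G) (g : Circle ≃ₜ Circle) (hg : g ∈ G) (hne : g ≠ 1) :
    {x : Circle | g x = x}.Finite := by
  have hdisj : ∀ x, x ∈ ELset L₁ → x ∉ ELset L₂ := fun x h h' =>
    (hpf.disjEnds ▸ (⟨h, h'⟩ : x ∈ ELset L₁ ∩ ELset L₂) : x ∈ (∅ : Set Circle))
  refine finite_fixed_aux (L := fun i => bif i then L₁ else L₂) hpf.orient ?_ ?_ ?_ ?_ ?_ hg hne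
  · rintro (_ | _)
    exacts [hpf.lam₂, hpf.lam₁]
  · rintro (_ | _)
    exacts [hpf.veryFull₂, hpf.veryFull₁]
  · rintro (_ | _)
    exacts [hpf.loose₂, hpf.loose₁]
  · rintro (_ | _)
    exacts [hpf.inv₂, hpf.inv₁]
  · rintro (_ | _) x hx
    · exact fun h => hdisj x h hx
    · exact hdisj x hx
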